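/- arXiv:1807.03536 — 2 statements merged into one kernel-verified Lean document; each statement's English description precedes it below -/
import Mathlib

section
/- Let Φ̊ be an irreducible root system in V and (Λ_α) an untwisted extension datum of type (Φ̊, Y), i.e. Λ_α equals one fixed subset Λ ⊆ Y for every α ∈ Φ̊, and let Φ^re be the associated set of real roots. If Ψ is a closed subroot system of Φ^re, then Gr(Ψ) is a closed subroot system of Φ̊, and for any two roots α, β lying in the same irreducible component of Gr(Ψ), the set Z_α(Ψ) is a translate of Z_β(Ψ). If moreover Ψ is a maximal closed subroot system of Φ^re, then Gr(Ψ) is not properly contained in any proper closed subroot system of Φ̊ (so Gr(Ψ) is either all of Φ̊ or a maximal closed subroot system of Φ̊). -/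
open scoped RealInnerProductSpace Pointwise

noncomputable section

namespace BdS

variable {V Y : Type*} [NormedAddCommGroup V] [InnerProductSpace ℝ V]
variable [AddCommGroup Y] [Module ℝ Y]

/-- `pairing β α = (β, α∨) = 2(β,α)/(α,α)`. -/
def pairing (β α : V) : ℝ := 2 * ⟪β, α⟫ / ⟪α, α⟫

/-- `reflRoot α v = s_α(v) = v − (v, α∨)α`. -/
def reflRoot (α v : V) : V := v - pairing v α • α

/-- A (finite) root system in `V`. -/
def IsRootSystem (Φ : Set V) : Prop :=
  Φ.Finite ∧ (0 : V) ∉ Φ ∧ Submodule.span ℝ Φ = ⊤ ∧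
    (∀ α ∈ Φ, ∀ β ∈ Φ, reflRoot α β ∈ Φ) ∧
    ∀ α ∈ Φ, ∀ β ∈ Φ, ∃ m : ℤ, pairing β α = (m : ℝ)

def IsReduced (Φ : Set V) : Prop :=
  ∀ α ∈ Φ, ∀ c : ℝ, c • α ∈ Φ → c • α = α ∨ c • α = -α

def IsIrreducible (Φ : Set V) : Prop :=
  ∀ Φ₁ Φ₂ : Set V, Φ = Φ₁ ∪ Φ₂ → (∀ x ∈ Φ₁, ∀ y ∈ Φ₂, ⟪x, y⟫ = 0) →
    Φ₁ = ∅ ∨ Φ₂ = ∅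

/-- divisible roots -/
def divSet (Φ : Set V) : Set V := {α ∈ Φ | (2:ℝ)⁻¹ • α ∈ Φ}
/-- non-divisible roots -/
def ndSet (Φ : Set V) : Set V := Φ \ divSet Φ
/-- short roots: non-divisible roots of non-maximal squared length -/
def shortSet (Φ : Set V) : Set V := {α ∈ ndSet Φ | ∃ β ∈ ndSet Φ, ⟪α, α⟫ < ⟪β, β⟫}
/-- long roots -/
def longSet (Φ : Set V) : Set V := ndSet Φ \ shortSet Φ

/-- An extension datum of type `(Φ, Y)`. -/
def IsExtensionDatum (Φ : Set V) (Λ : V → Set Y) : Prop :=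
  (∀ α ∈ Φ, ∀ β ∈ Φ, ∀ z ∈ Λ α, ∀ y ∈ Λ β, y - pairing β α • z ∈ Λ (reflRoot α β)) ∧
  (0 : Y) ∈ Λ 0 ∧
  (∀ α ∈ ndSet Φ, (0 : Y) ∈ Λ α) ∧
  (∀ α ∈ divSet Φ, (Λ α).Nonempty) ∧
  Submodule.span ℝ (⋃ α ∈ insert (0 : V) Φ, Λ α) = ⊤

/-- subroot system of a finite root system -/
def IsSubRS (Φ Δ : Set V) : Prop :=
  Δ.Nonempty ∧ Δ ⊆ Φ ∧ ∀ α ∈ Δ, ∀ β ∈ Δ, reflRoot α β ∈ Δ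

def IsClosedSubRS (Φ Δ : Set V) : Prop :=
  IsSubRS Φ Δ ∧ ∀ α ∈ Δ, ∀ β ∈ Δ, α + β ∈ Φ → α + β ∈ Δ

def IsMaxClosedSubRS (Φ Δ : Set V) : Prop :=
  IsClosedSubRS Φ Δ ∧ Δ ≠ Φ ∧
    ∀ Δ' : Set V, IsClosedSubRS Φ Δ' → Δ' ≠ Φ → Δ ⊆ Δ' → Δ' = Δ

/-- semi-closed subroot system, relative to given short/long/divisible parts -/
def IsSemiClosedSubRS (Φ Φs Φl Φd Δ : Set V) : Prop :=
  IsSubRS Φ Δ ∧ ¬ (∀ α ∈ Δ, ∀ β ∈ Δ, α + β ∈ Φ → α + β ∈ Δ) ∧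
    ∀ α ∈ Δ, ∀ β ∈ Δ, α + β ∈ Φ → α + β ∉ Δ →
      (α ∈ Φs ∧ β ∈ Φs ∧ α + β ∈ Φl ∪ Φd) ∨ (α ∈ Φl ∧ β ∈ Φl ∧ α + β ∈ Φd)

def IsMaxSemiClosedSubRS (Φ Φs Φl Φd Δ : Set V) : Prop :=
  IsSemiClosedSubRS Φ Φs Φl Φd Δ ∧
    ∀ Δ' : Set V, IsClosedSubRS Φ Δ' → Δ' ≠ Φ → ¬ Δ ⊂ Δ'

/-- the set of real roots attached to an extension datum -/
def PhiRe (Φ : Set V) (Λ : V → Set Y) : Set (V × Y) := {x | x.1 ∈ Φ ∧ x.2 ∈ Λ x.1}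

/-- affine reflection `s_{α ⊕ y}(β ⊕ z) = s_α(β) ⊕ (z − (β,α∨)y)` -/
def reflAff (a x : V × Y) : V × Y := (reflRoot a.1 x.1, x.2 - pairing x.1 a.1 • a.2)

/-- subroot system of a set of real roots `R` -/
def IsSubSys (R Ψ : Set (V × Y)) : Prop :=
  Ψ.Nonempty ∧ Ψ ⊆ R ∧ Ψ ≠ R ∧ ∀ a ∈ Ψ, ∀ x ∈ Ψ, reflAff a x ∈ Ψ

def IsClosedSubSys (R Ψ : Set (V × Y)) : Prop :=
  IsSubSys R Ψ ∧ ∀ x ∈ Ψ, ∀ y ∈ Ψ, x + y ∈ R → x + y ∈ Ψ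

def IsMaxClosedSubSys (R Ψ : Set (V × Y)) : Prop :=
  IsClosedSubSys R Ψ ∧ ∀ Ψ' : Set (V × Y), IsClosedSubSys R Ψ' → Ψ ⊆ Ψ' → Ψ' = Ψ

/-- gradient of a subroot system -/
def Gr (Ψ : Set (V × Y)) : Set V := {α | ∃ y : Y, (α, y) ∈ Ψ}

def Zset (Ψ : Set (V × Y)) (α : V) : Set Y := {y | (α, y) ∈ Ψ}

abbrev E (n : ℕ) := EuclideanSpace ℝ (Fin n)

def eps {n : ℕ} (i : Fin n) : E n := EuclideanSpace.single i 1

def shortBC (n : ℕ) : Set (E n) := {v | ∃ i : Fin n, v = eps i ∨ v = -eps i}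

def longBC (n : ℕ) : Set (E n) :=
  {v | ∃ i j : Fin n, i ≠ j ∧ ∃ c d : ℝ, (c = 1 ∨ c = -1) ∧ (d = 1 ∨ d = -1) ∧
    v = c • eps i + d • eps j}

def divBC (n : ℕ) : Set (E n) :=
  {v | ∃ i : Fin n, v = (2:ℝ) • eps i ∨ v = -((2:ℝ) • eps i)}

def BCn (n : ℕ) : Set (E n) := shortBC n ∪ longBC n ∪ divBC n
def Bn (n : ℕ) : Set (E n) := shortBC n ∪ longBC n
def Cn (n : ℕ) : Set (E n) := longBC n ∪ divBC n

/-- two roots lie in the same irreducible component of `Δ`: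
joined by a chain of pairwise non-orthogonal roots of `Δ`. -/
def SameComp {V : Type*} [NormedAddCommGroup V] [InnerProductSpace ℝ V]
    (Δ : Set V) (α β : V) : Prop :=
  Relation.ReflTransGen (fun x y => x ∈ Δ ∧ y ∈ Δ ∧ ⟪x, y⟫ ≠ 0) α β

lemma pairing_mul {α : V} (hα : α ≠ 0) (β : V) : pairing β α * ⟪α, α⟫ = 2 * ⟪β, α⟫ := by
  have h : ⟪α, α⟫ ≠ 0 := by simpa using hα
  unfold pairing
  field_simp

lemma inner_self_pos' {α : V} (hα : α ≠ 0) : 0 < ⟪α, α⟫ := real_inner_self_pos.mpr hα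

lemma pairing_self {α : V} (hα : α ≠ 0) : pairing α α = 2 := by
  have h := pairing_mul hα α
  have h2 := inner_self_pos' hα
  nlinarith [mul_right_cancel₀ h2.ne' h]

lemma pairing_prod_le {α β : V} (hα : α ≠ 0) (hβ : β ≠ 0) :
    pairing β α * pairing α β ≤ 4 := by
  have h1 := pairing_mul hα β
  have h2 := pairing_mul hβ α
  have ha := inner_self_pos' hα
  have hb := inner_self_pos' hβ
  have hc := real_inner_mul_inner_self_le α β
  rw [real_inner_comm α β] at h1
  have hab := mul_pos ha hb
  by_contra hlt
  push Not at hlt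
  have h3 := mul_lt_mul_of_pos_right hlt hab
  have h4 : pairing β α * pairing α β * (⟪α, α⟫ * ⟪β, β⟫) = (2 * ⟪α, β⟫) * (2 * ⟪α, β⟫) := by
    calc _ = (pairing β α * ⟪α, α⟫) * (pairing α β * ⟪β, β⟫) := by ring
      _ = _ := by rw [h1, h2]
  linarith

/-- roots at obtuse angle, not opposite: the sum is a root -/
lemma add_mem_of_neg {Φ : Set V} (hΦ : IsRootSystem Φ) {α β : V} (hα : α ∈ Φ) (hβ : β ∈ Φ)
    (hneg : ⟪α, β⟫ < 0) (hne : α + β ≠ 0) : α + β ∈ Φ := by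
  obtain ⟨-, h0, -, hr, hint⟩ := hΦ
  have hα0 : α ≠ 0 := fun h => h0 (h ▸ hα)
  have hβ0 : β ≠ 0 := fun h => h0 (h ▸ hβ)
  obtain ⟨m, hm⟩ := hint α hα β hβ
  obtain ⟨n, hn⟩ := hint β hβ α hα
  have h1 := pairing_mul hα0 β
  have h2 := pairing_mul hβ0 α
  have h3 := pairing_prod_le hα0 hβ0
  have ha := inner_self_pos' hα0
  have hb := inner_self_pos' hβ0
  rw [real_inner_comm α β] at h1
  rw [hm] at h1 h3
  rw [hn] at h2 h3
  have hm0 : m < 0 := by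
    have : (m : ℝ) < 0 := by by_contra hc; push Not at hc; nlinarith
    exact_mod_cast this
  have hn0 : n < 0 := by
    have : (n : ℝ) < 0 := by by_contra hc; push Not at hc; nlinarith
    exact_mod_cast this
  have h3' : m * n ≤ 4 := by exact_mod_cast h3
  by_cases hm1 : m = -1
  · have := hr α hα β hβ
    rw [reflRoot, hm, hm1] at this
    convert this using 1
    simp [add_comm]
  by_cases hn1 : n = -1
  · have := hr β hβ α hα
    rw [reflRoot, hn, hn1] at this
    convert this using 1
    simp
  have hm2 : m = -2 := by
    have : m ≤ -2 := by omega
    have : n ≤ -2 := by omega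
    nlinarith
  have hn2 : n = -2 := by
    have : n ≤ -2 := by omega
    nlinarith
  exfalso
  apply hne
  rw [← inner_self_eq_zero (𝕜 := ℝ), real_inner_add_add_self]
  rw [hm2] at h1
  rw [hn2] at h2
  push_cast at h1 h2
  linarith

/-- if the sum of two roots is a root, some pairing is odd -/
lemma exists_odd {Φ : Set V} (hΦ : IsRootSystem Φ) {α β : V} (hα : α ∈ Φ) (hβ : β ∈ Φ)
    (hs : α + β ∈ Φ) : ∃ γ ∈ Φ, ∃ δ ∈ Φ, ∃ k : ℤ, pairing δ γ = ((2 * k + 1 : ℤ) : ℝ) := by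
  obtain ⟨-, h0, -, hr, hint⟩ := hΦ
  have hα0 : α ≠ 0 := fun h => h0 (h ▸ hα)
  have hβ0 : β ≠ 0 := fun h => h0 (h ▸ hβ)
  have hs0 : α + β ≠ 0 := fun h => h0 (h ▸ hs)
  obtain ⟨m, hm⟩ := hint α hα β hβ
  obtain ⟨n, hn⟩ := hint β hβ α hα
  obtain ⟨r, hrr⟩ := hint _ hs α hα
  by_contra hno
  push Not at hno
  have ev : ∀ γ ∈ Φ, ∀ δ ∈ Φ, ∀ q : ℤ, pairing δ γ = q → ∃ k : ℤ, q = 2 * k := by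
    intro γ hγ δ hδ q hq
    rcases Int.even_or_odd' q with ⟨k, hk | hk⟩
    · exact ⟨k, hk⟩
    · exact absurd (by rw [hq, hk]) (hno γ hγ δ hδ k)
  obtain ⟨m', hm'⟩ := ev α hα β hβ m hm
  obtain ⟨n', hn'⟩ := ev β hβ α hα n hn
  obtain ⟨r', hr'⟩ := ev _ hs α hα r hrr
  have h1 := pairing_mul hα0 β
  have h2 := pairing_mul hβ0 α
  have h3 := pairing_prod_le hα0 hβ0
  have h4 := pairing_mul hs0 α
  have ha := inner_self_pos' hα0
  have hb := inner_self_pos' hβ0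
  have hc := inner_self_pos' hs0
  rw [real_inner_comm α β] at h1
  rw [real_inner_add_add_self] at h4 hc
  rw [inner_add_right] at h4
  rw [hm] at h1 h3
  rw [hn] at h2 h3
  rw [hrr] at h4
  have h3' : m * n ≤ 4 := by exact_mod_cast h3
  subst hm' hn' hr'
  push_cast at h1 h2 h4
  have key : ¬ (0 < ⟪α, α⟫ + ⟪α, β⟫ ∧ 0 < ⟪β, β⟫ + ⟪α, β⟫) := by
    rintro ⟨u, v⟩
    have a1 : (0 : ℝ) < r' := by by_contra hx; push Not at hx; nlinarith
    have a2 : (r' : ℝ) < 1 := by by_contra hx; push Not at hx; nlinarith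
    have a3 : 0 < r' := by exact_mod_cast a1
    have a4 : r' < 1 := by exact_mod_cast a2
    omega
  have hm1 : m' < 0 := by
    by_contra hx
    push Not at hx
    have hx' : (0 : ℝ) ≤ m' := by exact_mod_cast hx
    apply key
    constructor <;> nlinarith
  have hn1 : n' < 0 := by
    by_contra hx
    push Not at hx
    have hx' : (0 : ℝ) ≤ n' := by exact_mod_cast hx
    apply key
    constructor <;> nlinarith
  have hm2 : m' = -1 := by nlinarith
  have hn2 : n' = -1 := by nlinarith
  rw [hm2] at h1
  rw [hn2] at h2
  push_cast at h1 h2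
  linarith

lemma zero_mem_lam {Φ : Set V} (hΦ : IsRootSystem Φ) {Λ : V → Set Y}
    (hΛ : IsExtensionDatum Φ Λ) {Λ₀ : Set Y} (hU : ∀ α ∈ Φ, Λ α = Λ₀) {α : V} (hα : α ∈ Φ) :
    (0 : Y) ∈ Λ₀ := by
  by_cases hd : α ∈ divSet Φ
  · have h2 : (2:ℝ)⁻¹ • α ∈ Φ := hd.2
    rw [← hU _ h2]
    apply hΛ.2.2.1
    refine ⟨h2, fun hh => ?_⟩
    have h4 : (2:ℝ)⁻¹ • (2:ℝ)⁻¹ • α ∈ Φ := hh.2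
    obtain ⟨k, hk⟩ := hΦ.2.2.2.2 α hα _ h4
    have hα0 : α ≠ 0 := fun h => hΦ.2.1 (h ▸ hα)
    have h1 := pairing_mul hα0 ((2:ℝ)⁻¹ • (2:ℝ)⁻¹ • α)
    have ha := inner_self_pos' hα0
    rw [hk, inner_smul_left, inner_smul_left] at h1
    simp only [map_inv₀, RCLike.conj_to_real] at h1
    have h5 : (k : ℝ) = 2⁻¹ := by
      apply mul_right_cancel₀ ha.ne'
      rw [h1]; simp
    have h6 : (2 * k : ℝ) = 1 := by rw [h5]; norm_num
    have h7 : 2 * k = 1 := by exact_mod_cast h6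
    omega
  · rw [← hU α hα]
    exact hΛ.2.2.1 α ⟨hα, hd⟩

lemma lam_add {Φ : Set V} (hΦ : IsRootSystem Φ) {Λ : V → Set Y}
    (hΛ : IsExtensionDatum Φ Λ) {Λ₀ : Set Y} (hU : ∀ α ∈ Φ, Λ α = Λ₀) {α β : V} (hα : α ∈ Φ)
    (hβ : β ∈ Φ) (hs : α + β ∈ Φ) {x y : Y} (hx : x ∈ Λ₀) (hy : y ∈ Λ₀) : x + y ∈ Λ₀ := by
  have hα0 : α ≠ 0 := fun h => hΦ.2.1 (h ▸ hα)
  have h0 := zero_mem_lam hΦ hΛ hU hα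
  have step : ∀ γ ∈ Φ, ∀ δ ∈ Φ, ∀ u ∈ Λ₀, ∀ v ∈ Λ₀, u - pairing δ γ • v ∈ Λ₀ := by
    intro γ hγ δ hδ u hu v hv
    have := hΛ.1 γ hγ δ hδ v (by rwa [hU γ hγ]) u (by rwa [hU δ hδ])
    rwa [hU _ (hΦ.2.2.2.1 γ hγ δ hδ)] at this
  have two : ∀ u ∈ Λ₀, ∀ v ∈ Λ₀, u - (2:ℝ) • v ∈ Λ₀ := by
    intro u hu v hv
    have := step α hα α hα u hu v hv
    rwa [pairing_self hα0] at this
  have neg : ∀ u ∈ Λ₀, -u ∈ Λ₀ := by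
    intro u hu
    have := two u hu u hu
    convert this using 1
    module
  have even : ∀ u ∈ Λ₀, ∀ v ∈ Λ₀, ∀ k : ℤ, u + (2 * k : ℝ) • v ∈ Λ₀ := by
    intro u hu v hv k
    induction k using Int.induction_on with
    | zero => simpa using hu
    | succ i ih =>
      have := two _ ih _ (neg v hv)
      convert this using 1
      push_cast
      module
    | pred i ih =>
      have := two _ ih _ hv
      convert this using 1
      push_cast
      module
  obtain ⟨γ, hγ, δ, hδ, k, hk⟩ := exists_odd hΦ hα hβ hs
  have h1 := step γ hγ δ hδ x hx _ (neg y hy)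
  rw [hk] at h1
  have h2 := even _ h1 y hy (-k)
  convert h2 using 1
  push_cast
  module

/-- Lemma 3.4: for an untwisted irreducible affine reflection system, gradients of
closed subroot systems are closed, the `Z_α` on an irreducible component agree up to
translation, and gradients of maximal closed subroot systems are not properly
contained in proper closed subroot systems. -/
theorem statement5 {V Y : Type*} [NormedAddCommGroup V] [InnerProductSpace ℝ V]
    [AddCommGroup Y] [Module ℝ Y] [FiniteDimensional ℝ V] [FiniteDimensional ℝ Y]
    (Φ : Set V) (hΦ : IsRootSystem Φ) (hirr : IsIrreducible Φ)
    (Λ : V → Set Y) (hΛ : IsExtensionDatum Φ Λ)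
    (Λ₀ : Set Y) (hU : ∀ α ∈ Φ, Λ α = Λ₀)
    (Ψ : Set (V × Y)) (hΨ : IsClosedSubSys (PhiRe Φ Λ) Ψ) :
    IsClosedSubRS Φ (Gr Ψ) ∧
    (∀ α ∈ Gr Ψ, ∀ β ∈ Gr Ψ, SameComp (Gr Ψ) α β →
      ∃ v : Y, Zset Ψ α = (fun y => v + y) '' Zset Ψ β) ∧
    (IsMaxClosedSubSys (PhiRe Φ Λ) Ψ →
      ∀ Δ : Set V, IsClosedSubRS Φ Δ → Δ ≠ Φ → ¬ Gr Ψ ⊂ Δ) := by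
  obtain ⟨⟨hne, hsub, hproper, hrefl⟩, hcl⟩ := hΨ
  have h0 : (0 : V) ∉ Φ := hΦ.2.1
  have hmemΦ : ∀ {α : V} {y : Y}, (α, y) ∈ Ψ → α ∈ Φ := fun h => (hsub h).1
  have hmemΛ : ∀ {α : V} {y : Y}, (α, y) ∈ Ψ → y ∈ Λ₀ := fun {α y} h => by
    have h2 : y ∈ Λ α := (hsub h).2
    rwa [hU α (hmemΦ h)] at h2
  have hadd : ∀ {α β : V} {y z : Y}, (α, y) ∈ Ψ → (β, z) ∈ Ψ → α + β ∈ Φ →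
      (α + β, y + z) ∈ Ψ := by
    intro α β y z h1 h2 hs
    refine hcl _ h1 _ h2 ⟨hs, ?_⟩
    change y + z ∈ Λ (α + β)
    rw [hU _ hs]
    exact lam_add hΦ hΛ hU (hmemΦ h1) (hmemΦ h2) hs (hmemΛ h1) (hmemΛ h2)
  have hre2 : ∀ {α : V} {y z : Y}, (α, y) ∈ Ψ → (α, z) ∈ Ψ → (-α, z - (2:ℝ) • y) ∈ Ψ := by
    intro α y z h1 h2
    have hα0 : α ≠ 0 := fun h => h0 (h ▸ hmemΦ h1)
    have h3 := hrefl _ h1 _ h2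
    simp only [reflAff, reflRoot, pairing_self hα0] at h3
    convert h3 using 2
    module
  have hneg : ∀ {α : V} {y : Y}, (α, y) ∈ Ψ → (-α, -y) ∈ Ψ := by
    intro α y h1
    have h3 := hre2 h1 h1
    convert h3 using 2
    module
  let T : V → V → Prop := fun α β => ∃ v : Y, ∀ y : Y, (α, v + y) ∈ Ψ ↔ (β, y) ∈ Ψ
  have Trefl : ∀ α, T α α := fun α => ⟨0, fun y => by simp⟩
  have Tsymm : ∀ {α β}, T α β → T β α := by
    rintro α β ⟨v, hv⟩
    refine ⟨-v, fun y => ?_⟩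
    rw [← hv]; simp
  have Ttrans : ∀ {α β γ}, T α β → T β γ → T α γ := by
    rintro α β γ ⟨v, hv⟩ ⟨w, hw⟩
    refine ⟨v + w, fun y => ?_⟩
    rw [add_assoc, hv, hw]
  have Tneg : ∀ {α}, α ∈ Gr Ψ → T (-α) α := by
    rintro α ⟨y, hy⟩
    refine ⟨-((2:ℝ) • y), fun z => ⟨fun h => ?_, fun h => ?_⟩⟩
    · have h2 := hre2 (hneg hy) h
      rw [neg_neg] at h2
      convert h2 using 2
      module
    · have h2 := hre2 hy h
      convert h2 using 2
      module
  have Tsum : ∀ {α β}, α ∈ Gr Ψ → β ∈ Gr Ψ → α + β ∈ Φ → T (α + β) α := by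
    rintro α β ⟨x, hx⟩ ⟨y, hy⟩ hs
    refine ⟨y, fun z => ⟨fun h => ?_, fun h => ?_⟩⟩
    · have h2 := hadd h (hneg hy) (by simpa using hmemΦ hx)
      simpa using h2
    · have h2 := hadd h hy hs
      rwa [add_comm z y] at h2
  have Tobt : ∀ {α β}, α ∈ Gr Ψ → β ∈ Gr Ψ → ⟪α, β⟫ < 0 → T α β := by
    intro α β hα hβ hlt
    by_cases hz : α + β = 0
    · rw [eq_neg_of_add_eq_zero_left hz]
      exact Tneg hβ
    · obtain ⟨x, hx⟩ := id hα
      obtain ⟨y, hy⟩ := id hβ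
      have hs := add_mem_of_neg hΦ (hmemΦ hx) (hmemΦ hy) hlt hz
      have h1 := Tsum hα hβ hs
      have h2 := Tsum hβ hα (by rwa [add_comm])
      rw [add_comm] at h2
      exact Ttrans (Tsymm h1) h2
  have Tnon : ∀ {α β}, α ∈ Gr Ψ → β ∈ Gr Ψ → ⟪α, β⟫ ≠ 0 → T α β := by
    intro α β hα hβ hn
    rcases lt_or_gt_of_ne hn with h | h
    · exact Tobt hα hβ h
    · have hβ' : -β ∈ Gr Ψ := by
        obtain ⟨y, hy⟩ := hβ
        exact ⟨-y, hneg hy⟩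
      exact Ttrans (Tobt hα hβ' (by rw [inner_neg_right]; linarith)) (Tneg hβ)
  refine ⟨⟨⟨?_, ?_, ?_⟩, ?_⟩, ?_, ?_⟩
  · obtain ⟨⟨α, y⟩, h⟩ := hne
    exact ⟨α, y, h⟩
  · rintro α ⟨y, h⟩
    exact hmemΦ h
  · rintro α ⟨y, hy⟩ β ⟨z, hz⟩
    exact ⟨_, hrefl _ hy _ hz⟩
  · rintro α ⟨y, hy⟩ β ⟨z, hz⟩ hs
    exact ⟨_, hadd hy hz hs⟩
  · intro α _ β _ hc
    have hT : T α β := by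
      induction hc with
      | refl => exact Trefl _
      | tail _ hstep ih => exact Ttrans (ih hstep.1) (Tnon hstep.1 hstep.2.1 hstep.2.2)
    obtain ⟨v, hv⟩ := hT
    refine ⟨v, ?_⟩
    ext y
    constructor
    · intro hy
      refine ⟨-v + y, ?_, by simp⟩
      change (β, -v + y) ∈ Ψ
      rw [← hv]
      simpa using (show (α, y) ∈ Ψ from hy)
    · rintro ⟨z, hz, rfl⟩
      exact (hv z).2 hz
  · rintro ⟨-, hmax⟩ Δ ⟨⟨hΔne, hΔsub, hΔr⟩, hΔc⟩ hΔΦ hss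
    obtain ⟨δ, hδ, hδn⟩ := Set.exists_of_ssubset hss
    have hz0 : (0 : Y) ∈ Λ₀ := zero_mem_lam hΦ hΛ hU (hΔsub hδ)
    have hΨ' : {x : V × Y | x.1 ∈ Δ ∧ x.2 ∈ Λ x.1} = Ψ := by
      refine hmax _ ⟨⟨⟨(δ, 0), hδ, ?_⟩, ?_, ?_, ?_⟩, ?_⟩ ?_
      · change (0 : Y) ∈ Λ δ
        rwa [hU δ (hΔsub hδ)]
      · exact fun x hx => ⟨hΔsub hx.1, hx.2⟩
      · intro heq
        apply hΔΦ
        refine Set.Subset.antisymm hΔsub fun α hα => ?_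
        have : ((α, 0) : V × Y) ∈ PhiRe Φ Λ := ⟨hα, by
          change (0 : Y) ∈ Λ α
          rwa [hU α hα]⟩
        rw [← heq] at this
        exact this.1
      · rintro a ⟨ha1, ha2⟩ x ⟨hx1, hx2⟩
        exact ⟨hΔr _ ha1 _ hx1, hΛ.1 _ (hΔsub ha1) _ (hΔsub hx1) _ ha2 _ hx2⟩
      · rintro x ⟨hx1, hx2⟩ y ⟨hy1, hy2⟩ hs
        exact ⟨hΔc _ hx1 _ hy1 hs.1, hs.2⟩
      · rintro ⟨α, y⟩ h
        exact ⟨hss.1 ⟨y, h⟩, (hsub h).2⟩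
    apply hδn
    refine ⟨0, ?_⟩
    rw [← hΨ']
    refine ⟨hδ, ?_⟩
    change (0 : Y) ∈ Λ δ
    rwa [hU δ (hΔsub hδ)]

end BdS
end
end

section
/- Let Φ̊ ⊂ ℝⁿ be the root system of type C_n with n ≥ 2. Then the set Φ̊_s of short roots is a maximal semi-closed subroot system of Φ̊, and it is the unique one: every maximal semi-closed subroot system of Φ̊ equals Φ̊_s. -/
open scoped RealInnerProductSpace Pointwise

noncomputable section

namespace BdS

variable {V Y : Type*} [NormedAddCommGroup V] [InnerProductSpace ℝ V]
variable [AddCommGroup Y] [Module ℝ Y]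

def Sg (c : ℝ) : Prop := c = 1 ∨ c = -1

lemma Sg.mul {c d : ℝ} (hc : Sg c) (hd : Sg d) : Sg (c * d) := by
  rcases hc with rfl | rfl <;> rcases hd with rfl | rfl <;> simp [Sg]

lemma Sg.neg {c : ℝ} (hc : Sg c) : Sg (-c) := by
  rcases hc with rfl | rfl <;> simp [Sg]

lemma Sg.sq {c : ℝ} (hc : Sg c) : c * c = 1 := by
  rcases hc with rfl | rfl <;> simp

lemma eps_apply {n : ℕ} (i k : Fin n) : (eps i : E n) k = if k = i then 1 else 0 := by
  simp [eps]

lemma inner_eps {n : ℕ} (v : E n) (i : Fin n) : ⟪v, eps i⟫ = v i := by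
  simp [eps, EuclideanSpace.inner_single_right]

lemma refl_short {n : ℕ} {i j : Fin n} (hij : i ≠ j) {c d : ℝ} (hc : Sg c) (hd : Sg d) (v : E n) :
    reflRoot (c • eps i + d • eps j) v
      = v - (c * v i + d * v j) • (c • eps i + d • eps j) := by
  have h1 := hc.sq
  have h2 := hd.sq
  have hn : ⟪(c • eps i + d • eps j : E n), c • eps i + d • eps j⟫ = 2 := by
    simp only [inner_add_right, inner_smul_right, inner_eps, PiLp.add_apply, PiLp.smul_apply,
      eps_apply, smul_eq_mul, if_neg hij, if_neg hij.symm, if_true]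
    linarith
  have hv : ⟪v, c • eps i + d • eps j⟫ = c * v i + d * v j := by
    simp only [inner_add_right, inner_smul_right, inner_eps]
  rw [reflRoot, pairing, hn, hv]
  congr 2
  ring

lemma refl_long {n : ℕ} (i : Fin n) {c : ℝ} (hc : Sg c) (v : E n) :
    reflRoot ((2 * c) • eps i) v = v - (c * v i) • ((2 * c) • eps i) := by
  have h1 := hc.sq
  have hn : ⟪((2 * c) • eps i : E n), (2 * c) • eps i⟫ = 4 := by
    simp only [inner_smul_right, inner_eps, PiLp.smul_apply, eps_apply, smul_eq_mul, if_true]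
    linarith
  have hv : ⟪v, (2 * c) • eps i⟫ = 2 * c * v i := by
    simp only [inner_smul_right, inner_eps]
  rw [reflRoot, pairing, hn, hv]
  congr 2
  ring

lemma refl_add {n : ℕ} (α v w : E n) : reflRoot α (v + w) = reflRoot α v + reflRoot α w := by
  simp only [reflRoot, pairing, inner_add_left]
  module

lemma refl_smul {n : ℕ} (α v : E n) (c : ℝ) : reflRoot α (c • v) = c • reflRoot α v := by
  simp only [reflRoot, pairing, real_inner_smul_left]
  module

lemma mem_div {n : ℕ} {v : E n} : v ∈ divBC n ↔ ∃ i c, Sg c ∧ v = (2 * c) • eps i := by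
  constructor
  · rintro ⟨i, h | h⟩
    · exact ⟨i, 1, .inl rfl, by simp [h]⟩
    · exact ⟨i, -1, .inr rfl, by rw [h]; module⟩
  · rintro ⟨i, c, rfl | rfl, h⟩
    · exact ⟨i, .inl (by simp [h])⟩
    · exact ⟨i, .inr (by rw [h]; module)⟩

lemma mem_long {n : ℕ} {v : E n} : v ∈ longBC n ↔
    ∃ i j, i ≠ j ∧ ∃ c d, Sg c ∧ Sg d ∧ v = c • eps i + d • eps j := Iff.rfl

lemma refl_perm {n : ℕ} {α : E n} (h : α ∈ Cn n) : ∃ (σ : Fin n → Fin n) (s : Fin n → ℝ),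
    Function.Injective σ ∧ (∀ k, Sg (s k)) ∧ ∀ k, reflRoot α (eps k) = s k • eps (σ k) := by
  rcases h with h | h
  · obtain ⟨i, j, hij, c, d, hc, hd, rfl⟩ := mem_long.1 h
    refine ⟨Equiv.swap i j, fun k => if k = i ∨ k = j then - (c * d) else 1,
      (Equiv.swap i j).injective, ?_, ?_⟩
    · intro k
      dsimp only
      split_ifs
      · exact (hc.mul hd).neg
      · exact .inl rfl
    · intro k
      have h1 := hc.sq
      have h2 := hd.sq
      rw [refl_short hij hc hd]
      by_cases hki : k = i
      · subst hki
        simp only [eps_apply, if_true, if_neg hij.symm, true_or, Equiv.swap_apply_left]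
        linear_combination (norm := module) (-h1) • (eps k : E n)
      · by_cases hkj : k = j
        · subst hkj
          simp only [eps_apply, if_true, if_neg hij, or_true, Equiv.swap_apply_right]
          linear_combination (norm := module) (-h2) • (eps k : E n)
        · simp only [eps_apply, if_neg (Ne.symm hki), if_neg (Ne.symm hkj), hki, hkj, or_self,
            if_false, Equiv.swap_apply_of_ne_of_ne hki hkj]
          module
  · obtain ⟨i, c, hc, rfl⟩ := mem_div.1 h
    refine ⟨id, fun k => if k = i then -1 else 1, Function.injective_id, ?_, ?_⟩
    · intro k
      dsimp only
      split_ifs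
      · exact .inr rfl
      · exact .inl rfl
    · intro k
      have h1 := hc.sq
      rw [refl_long i hc]
      by_cases hki : k = i
      · subst hki
        simp only [eps_apply, if_true, id]
        linear_combination (norm := module) (-2 * h1) • (eps k : E n)
      · simp only [eps_apply, if_neg (Ne.symm hki), hki, if_false, id]
        module

lemma refl_mem_long {n : ℕ} {α β : E n} (h : α ∈ Cn n) (hb : β ∈ longBC n) :
    reflRoot α β ∈ longBC n := by
  obtain ⟨σ, s, hσ, hs, hr⟩ := refl_perm h
  obtain ⟨i, j, hij, c, d, hc, hd, rfl⟩ := mem_long.1 hb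
  refine mem_long.2 ⟨σ i, σ j, hσ.ne hij, c * s i, d * s j, hc.mul (hs i), hd.mul (hs j), ?_⟩
  rw [refl_add, refl_smul, refl_smul, hr, hr, smul_smul, smul_smul]

lemma refl_mem_div {n : ℕ} {α β : E n} (h : α ∈ Cn n) (hb : β ∈ divBC n) :
    reflRoot α β ∈ divBC n := by
  obtain ⟨σ, s, hσ, hs, hr⟩ := refl_perm h
  obtain ⟨i, c, hc, rfl⟩ := mem_div.1 hb
  refine mem_div.2 ⟨σ i, c * s i, hc.mul (hs i), ?_⟩
  rw [refl_smul, hr, smul_smul, mul_assoc]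

lemma refl_mem {n : ℕ} {α β : E n} (h : α ∈ Cn n) (hb : β ∈ Cn n) :
    reflRoot α β ∈ Cn n :=
  hb.imp (refl_mem_long h) (refl_mem_div h)

/-- long and short are disjoint -/
lemma div_not_long {n : ℕ} {v : E n} (h : v ∈ divBC n) : v ∉ longBC n := by
  intro h'
  obtain ⟨i, j, hij, c, d, hc, hd, rfl⟩ := mem_long.1 h'
  obtain ⟨k, e, he, hv⟩ := mem_div.1 h
  have h1 := congrArg (fun v : E n => v i) hv
  have h2 := congrArg (fun v : E n => v j) hv
  simp only [PiLp.add_apply, PiLp.smul_apply, eps_apply, smul_eq_mul, if_neg hij,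
    if_neg hij.symm, if_true] at h1 h2
  have h3 := hc.sq
  have h4 := hd.sq
  by_cases hik : i = k
  · have : j ≠ k := fun h => hij (hik.trans h.symm)
    rw [if_neg this] at h2
    have : d = 0 := by linarith
    simp [this] at h4
  · rw [if_neg hik] at h1
    have : c = 0 := by linarith
    simp [this] at h3

lemma Sg.int {c : ℝ} (hc : Sg c) : ∃ m : ℤ, c = m := by
  rcases hc with rfl | rfl
  · exact ⟨1, by simp⟩
  · exact ⟨-1, by simp⟩

lemma eps_int {n : ℕ} (i k : Fin n) : ∃ m : ℤ, (eps i : E n) k = m := by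
  rw [eps_apply]
  split_ifs
  · exact ⟨1, by simp⟩
  · exact ⟨0, by simp⟩

lemma coord_int {n : ℕ} {v : E n} (h : v ∈ Cn n) (k : Fin n) : ∃ m : ℤ, v k = m := by
  rcases h with h | h
  · obtain ⟨i, j, hij, c, d, hc, hd, rfl⟩ := mem_long.1 h
    obtain ⟨a, ha⟩ := hc.int
    obtain ⟨b, hb⟩ := hd.int
    obtain ⟨p, hp⟩ := eps_int i k
    obtain ⟨q, hq⟩ := eps_int j k
    refine ⟨a * p + b * q, ?_⟩
    simp [hp, hq, ha, hb]
  · obtain ⟨i, c, hc, rfl⟩ := mem_div.1 h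
    obtain ⟨a, ha⟩ := hc.int
    obtain ⟨p, hp⟩ := eps_int i k
    refine ⟨2 * a * p, ?_⟩
    simp [hp, ha]

lemma refl_int {n : ℕ} {α β : E n} (h : α ∈ Cn n) (hb : β ∈ Cn n) :
    ∃ m : ℤ, reflRoot α β = β - (m : ℝ) • α := by
  rcases h with h | h
  · obtain ⟨i, j, hij, c, d, hc, hd, rfl⟩ := mem_long.1 h
    obtain ⟨a, ha⟩ := hc.int
    obtain ⟨b, hb'⟩ := hd.int
    obtain ⟨p, hp⟩ := coord_int hb i
    obtain ⟨q, hq⟩ := coord_int hb j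
    refine ⟨a * p + b * q, ?_⟩
    rw [refl_short hij hc hd, hp, hq]
    push_cast
    rw [← ha, ← hb']
  · obtain ⟨i, c, hc, rfl⟩ := mem_div.1 h
    obtain ⟨a, ha⟩ := hc.int
    obtain ⟨p, hp⟩ := coord_int hb i
    refine ⟨a * p, ?_⟩
    rw [refl_long i hc, hp]
    push_cast
    rw [← ha]

open Classical in
/-- coordinate sum over `A` -/
def fA {n : ℕ} (A : Set (Fin n)) (v : E n) : ℝ := ∑ k, if k ∈ A then v k else 0

lemma fA_add {n : ℕ} (A : Set (Fin n)) (v w : E n) : fA A (v + w) = fA A v + fA A w := by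
  unfold fA
  rw [← Finset.sum_add_distrib]
  refine Finset.sum_congr rfl fun k _ => ?_
  split_ifs <;> simp

lemma fA_smul {n : ℕ} (A : Set (Fin n)) (c : ℝ) (v : E n) : fA A (c • v) = c * fA A v := by
  unfold fA
  rw [Finset.mul_sum]
  refine Finset.sum_congr rfl fun k _ => ?_
  split_ifs <;> simp

lemma fA_eps_mem {n : ℕ} {A : Set (Fin n)} {i : Fin n} (h : i ∈ A) : fA A (eps i) = 1 := by
  classical
  unfold fA
  rw [Finset.sum_eq_single i]
  · simp [h, eps_apply]
  · intro b _ hb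
    simp [eps_apply, hb]
  · simp

lemma fA_eps_not_mem {n : ℕ} {A : Set (Fin n)} {i : Fin n} (h : i ∉ A) : fA A (eps i) = 0 := by
  classical
  unfold fA
  refine Finset.sum_eq_zero fun b _ => ?_
  by_cases hb : b = i
  · subst hb; simp [h]
  · simp [eps_apply, hb]

/-- the closed subsystem attached to `A` -/
def DA {n : ℕ} (A : Set (Fin n)) : Set (E n) := {v | v ∈ Cn n ∧ ∃ m : ℤ, fA A v = 2 * m}

lemma DA_closed {n : ℕ} (A : Set (Fin n)) (hne : (DA A).Nonempty) :
    IsClosedSubRS (Cn n) (DA A) := by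
  refine ⟨⟨hne, fun v hv => hv.1, ?_⟩, ?_⟩
  · rintro α ⟨ha, p, hp⟩ β ⟨hb, q, hq⟩
    refine ⟨refl_mem ha hb, ?_⟩
    obtain ⟨m, hm⟩ := refl_int ha hb
    refine ⟨q - m * p, ?_⟩
    rw [hm, sub_eq_add_neg, ← neg_smul, fA_add, fA_smul, hp, hq]
    push_cast
    ring
  · rintro α ⟨ha, p, hp⟩ β ⟨hb, q, hq⟩ h
    refine ⟨h, p + q, ?_⟩
    rw [fA_add, hp, hq]
    push_cast
    ring

lemma add_div_form {n : ℕ} {α β : E n} (ha : α ∈ longBC n) (hb : β ∈ longBC n)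
    (h : α + β ∈ divBC n) : ∃ i j, i ≠ j ∧ ∃ c d, Sg c ∧ Sg d ∧
      α = c • eps i + d • eps j ∧ β = c • eps i - d • eps j := by
  obtain ⟨i, c, hc, hs⟩ := mem_div.1 h
  have hb' : β = (2 * c) • eps i - α := by rw [← hs]; abel
  have hcoord : ∀ k l : Fin n, k ≠ l → ∀ e f : ℝ, Sg e → Sg f → α = e • eps k + f • eps l →
      k = i → ∃ i j, i ≠ j ∧ ∃ c d, Sg c ∧ Sg d ∧
      α = c • eps i + d • eps j ∧ β = c • eps i - d • eps j := by
    rintro k l hkl e f he hf hα rfl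
    have hec : e = c := by
      obtain ⟨p, q, hpq, g, h', hg, hh, hβ⟩ := mem_long.1 hb
      have h1 := congrArg (fun v : E n => v k) hb'
      have h2 := congrArg (fun v : E n => v k) hβ
      simp only [hα, PiLp.add_apply, PiLp.sub_apply, PiLp.smul_apply, eps_apply, smul_eq_mul,
        if_true, if_neg hkl] at h1 h2
      rw [h2] at h1
      have hle : (if k = p then (1:ℝ) else 0) + (if k = q then (1:ℝ) else 0) ≤ 1 := by
        split_ifs with h3 h4
        · exact absurd (h3.symm.trans h4) hpq
        all_goals norm_num
      rcases hc with rfl | rfl <;> rcases he with rfl | rfl <;> try rfl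
      all_goals
        exfalso
        split_ifs at h1 hle with h3 h4 <;> rcases hg with rfl | rfl <;>
          rcases hh with rfl | rfl <;> linarith
    subst hec
    refine ⟨k, l, hkl, e, f, he, hf, hα, ?_⟩
    rw [hb', hα]
    module
  obtain ⟨k, l, hkl, e, f, he, hf, hα⟩ := mem_long.1 ha
  by_cases hki : k = i
  · exact hcoord k l hkl e f he hf hα hki
  · by_cases hli : l = i
    · exact hcoord l k hkl.symm f e hf he (by rw [hα, add_comm]) hli
    · exfalso
      obtain ⟨p, q, hpq, g, h', hg, hh, hβ⟩ := mem_long.1 hb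
      have h1 := congrArg (fun v : E n => v i) hb'
      have h2 := congrArg (fun v : E n => v i) hβ
      simp only [hα, PiLp.add_apply, PiLp.sub_apply, PiLp.smul_apply, eps_apply, smul_eq_mul,
        if_true, if_neg (Ne.symm hki), if_neg (Ne.symm hli)] at h1 h2
      rw [h2] at h1
      have hle : (if i = p then (1:ℝ) else 0) + (if i = q then (1:ℝ) else 0) ≤ 1 := by
        split_ifs with h3 h4
        · exact absurd (h3.symm.trans h4) hpq
        all_goals norm_num
      split_ifs at h1 hle with h3 h4 <;> rcases hg with rfl | rfl <;>
          rcases hh with rfl | rfl <;> rcases hc with rfl | rfl <;> linarith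

lemma refl_self {n : ℕ} {α : E n} (h : α ∈ Cn n) : reflRoot α α = -α := by
  have h0 : ⟪α, α⟫ ≠ 0 := by
    intro h0
    rw [inner_self_eq_zero] at h0
    subst h0
    rcases h with h | h
    · obtain ⟨i, j, hij, c, d, hc, hd, h⟩ := mem_long.1 h
      have h1 := congrArg (fun v : E n => v i) h
      simp [eps_apply, hij] at h1
      have := hc.sq
      simp [← h1] at this
    · obtain ⟨i, c, hc, h⟩ := mem_div.1 h
      have h1 := congrArg (fun v : E n => v i) h
      simp [eps_apply] at h1
      have := hc.sq
      simp [h1] at this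
  rw [reflRoot, pairing, mul_div_assoc, div_self h0]
  module

/-- Middle step: chaining two short roots through a common index. -/
lemma chain {n : ℕ} {Δ : Set (E n)} (hr : ∀ α ∈ Δ, ∀ β ∈ Δ, reflRoot α β ∈ Δ)
    {i k l : Fin n} (hik : i ≠ k) (hil : i ≠ l) (hkl : k ≠ l) {a c b d : ℝ}
    (ha : Sg a) (_hc : Sg c) (hb : Sg b) (hd : Sg d)
    (h1 : a • eps i + c • eps k ∈ Δ) (h2 : b • eps i + d • eps l ∈ Δ) :
    c • eps k + (-(a * b * d)) • eps l ∈ Δ := by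
  have h := hr _ h2 _ h1
  rw [refl_short hil hb hd] at h
  simp only [PiLp.add_apply, PiLp.smul_apply, eps_apply, smul_eq_mul, if_true, if_neg hik,
    if_neg hil.symm, if_neg hkl.symm] at h
  convert h using 1
  have := hb.sq
  linear_combination (norm := module) (a * this) • (eps i : E n)

lemma refl_long_short {n : ℕ} {Δ : Set (E n)} (hr : ∀ α ∈ Δ, ∀ β ∈ Δ, reflRoot α β ∈ Δ)
    {i k : Fin n} (hik : i ≠ k) {a c b : ℝ}
    (ha : Sg a) (hc : Sg c) (h1 : a • eps i + c • eps k ∈ Δ) (h2 : (2 * b) • eps k ∈ Δ) :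
    (2 * (-(a * b * c))) • eps i ∈ Δ := by
  have h := hr _ h1 _ h2
  rw [refl_short hik ha hc] at h
  simp only [PiLp.smul_apply, eps_apply, smul_eq_mul, if_true, if_neg hik] at h
  convert h using 1
  have := hc.sq
  linear_combination (norm := module) (2 * b * this) • (eps k : E n)

theorem unique_part {n : ℕ} (Δ : Set (E n))
    (h : IsMaxSemiClosedSubRS (Cn n) (longBC n) (divBC n) ∅ Δ) : Δ = longBC n := by
  obtain ⟨⟨⟨hne, hsub, hr⟩, hnc, hsc⟩, hmax⟩ := h
  have hmax' : ∀ A : Set (Fin n), Δ ⊆ DA A → DA A = Cn n := by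
    intro A hA
    by_contra hcon
    have hcl := DA_closed A (hne.mono hA)
    refine hmax _ hcl hcon (hA.ssubset_of_ne ?_)
    rintro rfl
    exact hnc hcl.2
  have hneg : ∀ α ∈ Δ, -α ∈ Δ := by
    intro α ha
    rw [← refl_self (hsub ha)]
    exact hr _ ha _ ha
  have hex : ∃ α ∈ Δ, ∃ β ∈ Δ, α + β ∈ Cn n ∧ α + β ∉ Δ := by
    by_contra hcon
    push Not at hcon
    exact hnc hcon
  obtain ⟨α, ha, β, hb, hs, hsn⟩ := hex
  have hdiv : α ∈ longBC n ∧ β ∈ longBC n ∧ α + β ∈ divBC n := by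
    rcases hsc α ha β hb hs hsn with ⟨h1, h2, h3⟩ | ⟨_, _, h3⟩
    · exact ⟨h1, h2, by simpa using h3⟩
    · exact absurd h3 (Set.notMem_empty _)
  obtain ⟨i, j, hij, c, d, hc, hd, rfl, rfl⟩ := add_div_form hdiv.1 hdiv.2.1 hdiv.2.2
  have hsum : ∀ e : ℝ, Sg e → (2 * e) • eps i ∉ Δ := by
    intro e he hmem
    have h1 : (2 * c) • eps i ∉ Δ := by
      convert hsn using 2
      module
    have h2 : e = c ∨ e = -c := by
      rcases he with rfl | rfl <;> rcases hc with rfl | rfl <;> simp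
    rcases h2 with rfl | rfl
    · exact h1 hmem
    · apply h1
      convert hneg _ hmem using 1
      module
  -- every index is linked to `i`
  have hlink : ∀ k, i ≠ k → ∃ a b, Sg a ∧ Sg b ∧ a • eps i + b • eps k ∈ Δ := by
    set A : Set (Fin n) := {k | k = i ∨ ∃ a b, Sg a ∧ Sg b ∧ a • eps i + b • eps k ∈ Δ} with hA
    have hstep : ∀ k l, k ≠ l → ∀ e f, Sg e → Sg f → e • eps k + f • eps l ∈ Δ →
        k ∈ A → l ∈ A := by
      rintro k l hkl e f he hf hmem (rfl | ⟨a, b, hsa, hsb, hab⟩)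
      · exact .inr ⟨e, f, he, hf, hmem⟩
      · by_cases hki : k = i
        · subst hki
          exact .inr ⟨e, f, he, hf, hmem⟩
        by_cases hli : l = i
        · exact .inl hli
        right
        refine ⟨a, _, hsa, ?_, chain hr hki hkl (Ne.symm hli) hsb hsa he hf
          (by rwa [add_comm] at hab) hmem⟩
        exact ((hsb.mul he).mul hf).neg
    have hDA : Δ ⊆ DA A := by
      intro v hv
      refine ⟨hsub hv, ?_⟩
      rcases hsub hv with h | h
      · obtain ⟨k, l, hkl, e, f, he, hf, rfl⟩ := mem_long.1 h
        rw [fA_add, fA_smul, fA_smul]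
        by_cases hk : k ∈ A
        · have hl := hstep k l hkl e f he hf hv hk
          rw [fA_eps_mem hk, fA_eps_mem hl]
          rcases he with rfl | rfl <;> rcases hf with rfl | rfl
          · exact ⟨1, by norm_num⟩
          · exact ⟨0, by norm_num⟩
          · exact ⟨0, by norm_num⟩
          · exact ⟨-1, by norm_num⟩
        · have hl : l ∉ A := fun hl => hk (hstep l k hkl.symm f e hf he (by rwa [add_comm]) hl)
          rw [fA_eps_not_mem hk, fA_eps_not_mem hl]
          exact ⟨0, by norm_num⟩
      · obtain ⟨k, e, he, rfl⟩ := mem_div.1 h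
        rw [fA_smul]
        obtain ⟨m, hm⟩ := he.int
        by_cases hk : k ∈ A
        · exact ⟨m, by rw [fA_eps_mem hk, hm]; ring⟩
        · exact ⟨0, by rw [fA_eps_not_mem hk]; simp⟩
    have hall := hmax' A hDA
    intro k hik
    by_contra hcon
    have hkA : k ∉ A := by
      rintro (h | h)
      · exact hik h.symm
      · exact hcon h
    have hiA : i ∈ A := .inl rfl
    have hmem : (1:ℝ) • eps i + (1:ℝ) • eps k ∈ Cn n :=
      .inl ⟨i, k, hik, 1, 1, .inl rfl, .inl rfl, rfl⟩
    rw [← hall] at hmem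
    obtain ⟨-, m, hm⟩ := hmem
    rw [fA_add, fA_smul, fA_smul, fA_eps_mem hiA, fA_eps_not_mem hkA] at hm
    have : (1 : ℤ) = 2 * m := by
      have : (1 : ℝ) = 2 * m := by linarith
      exact_mod_cast this
    omega
  -- all sign choices at `i, k`
  have hflip : ∀ k, i ≠ k → ∀ a b, Sg a → Sg b → a • eps i + b • eps k ∈ Δ := by
    have key : ∀ k, i ≠ k → ∀ a b, a • eps i + b • eps k ∈ Δ → a • eps i + (-b) • eps k ∈ Δ →
        Sg a → Sg b → ∀ a' b', Sg a' → Sg b' → a' • eps i + b' • eps k ∈ Δ := by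
      intro k _ a b h1 h2 hsa hsb a' b' ha' hb'
      have h3 := hneg _ h1
      have h4 := hneg _ h2
      have e3 : -(a • eps i + b • eps k : E n) = (-a) • eps i + (-b) • eps k := by module
      have e4 : -(a • eps i + (-b) • eps k : E n) = (-a) • eps i + b • eps k := by module
      rw [e3] at h3
      rw [e4] at h4
      have hA : a' = a ∨ a' = -a := by
        rcases hsa with rfl | rfl <;> rcases ha' with rfl | rfl <;> simp
      have hB : b' = b ∨ b' = -b := by
        rcases hsb with rfl | rfl <;> rcases hb' with rfl | rfl <;> simp
      rcases hA with rfl | rfl <;> rcases hB with rfl | rfl <;> assumption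
    have hj : ∀ a b, Sg a → Sg b → a • eps i + b • eps j ∈ Δ := by
      refine key j hij c d ha ?_ hc hd
      convert hb using 1
      module
    intro k hik
    by_cases hkj : k = j
    · subst hkj; exact hj
    obtain ⟨a, b, hsa, hsb, hab⟩ := hlink k hik
    have one : Sg 1 := .inl rfl
    -- `a' ε_j + b ε_k` for both signs, then back to `i`
    have h1 : b • eps k + (-(a * 1 * 1)) • eps j ∈ Δ :=
      chain hr hik hij hkj hsa hsb one one hab (hj 1 1 one one)
    have h1' : (-(a * 1 * 1)) • eps j + b • eps k ∈ Δ := by rwa [add_comm] at h1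
    have h2 : b • eps k + (-((-(a * 1 * 1)) * 1 * a)) • eps i ∈ Δ :=
      chain hr (Ne.symm hkj) hij.symm hik.symm (by simpa using hsa.neg) hsb one hsa h1'
        (by have := hj a 1 hsa one; rwa [add_comm] at this)
    have h3 : b • eps k + (-((-(a * 1 * 1)) * 1 * (-a))) • eps i ∈ Δ :=
      chain hr (Ne.symm hkj) hij.symm hik.symm (by simpa using hsa.neg) hsb one hsa.neg h1'
        (by have := hj (-a) 1 hsa.neg one; rwa [add_comm] at this)
    have haa := hsa.sq
    have e2 : (-((-(a * 1 * 1)) * 1 * a)) = 1 := by linarith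
    have e3 : (-((-(a * 1 * 1)) * 1 * (-a))) = -1 := by linarith
    rw [e2, add_comm] at h2
    rw [e3] at h3
    refine key k hik 1 b h2 ?_ one hsb
    convert hneg _ h3 using 1
    module
  apply Set.Subset.antisymm
  · intro v hv
    rcases hsub hv with h | h
    · exact h
    · exfalso
      obtain ⟨k, e, he, rfl⟩ := mem_div.1 h
      by_cases hik : i = k
      · subst hik; exact hsum e he hv
      · obtain ⟨a, b, hsa, hsb, hab⟩ := hlink k hik
        exact hsum _ ((hsa.mul he).mul hsb).neg (refl_long_short hr hik hsa hsb hab hv)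
  · intro v hv
    obtain ⟨k, l, hkl, e, f, he, hf, rfl⟩ := mem_long.1 hv
    by_cases hik : i = k
    · subst hik; exact hflip l hkl e f he hf
    by_cases hil : i = l
    · subst hil
      rw [add_comm]
      exact hflip k hkl.symm f e hf he
    have one : Sg 1 := .inl rfl
    have := chain hr hik hil hkl one he one hf.neg (hflip k hik 1 e one he)
      (hflip l hil 1 (-f) one hf.neg)
    simpa using this

theorem max_part {n : ℕ} (hn : 2 ≤ n) :
    IsMaxSemiClosedSubRS (Cn n) (longBC n) (divBC n) (∅ : Set (E n)) (longBC n) := by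
  have one : Sg 1 := .inl rfl
  have mone : Sg (-1) := .inr rfl
  have hother : ∀ i : Fin n, ∃ j, i ≠ j := by
    intro i
    have : Nontrivial (Fin n) := Fin.nontrivial_iff_two_le.2 hn
    obtain ⟨j, hj⟩ := exists_ne i
    exact ⟨j, hj.symm⟩
  have hgen : ∀ (i j : Fin n) (c : ℝ),
      ((2 * c) • eps i : E n) = (c • eps i + (1:ℝ) • eps j) + (c • eps i + (-1:ℝ) • eps j) := by
    intro i j c
    module
  have hmem : ∀ (i j : Fin n) (c d : ℝ), i ≠ j → Sg c → Sg d →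
      (c • eps i + d • eps j : E n) ∈ longBC n :=
    fun i j c d h hc hd => ⟨i, j, h, c, d, hc, hd, rfl⟩
  have hnotclosed : ¬ (∀ α ∈ longBC n, ∀ β ∈ longBC n, α + β ∈ Cn n → α + β ∈ longBC n) := by
    intro hcl
    obtain ⟨j, hj⟩ := hother ⟨0, by omega⟩
    have hd : ((2 * 1 : ℝ) • eps ⟨0, by omega⟩ : E n) ∈ divBC n := mem_div.2 ⟨_, 1, one, rfl⟩
    have := hcl _ (hmem _ j 1 1 hj one one) _ (hmem _ j 1 (-1) hj one mone)
      (by rw [← hgen]; exact .inr hd)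
    rw [← hgen] at this
    exact div_not_long hd this
  refine ⟨⟨⟨?_, fun v hv => .inl hv, fun α ha β hb => refl_mem_long (.inl ha) hb⟩,
    hnotclosed, ?_⟩, ?_⟩
  · obtain ⟨j, hj⟩ := hother ⟨0, by omega⟩
    exact ⟨_, hmem _ j 1 1 hj one one⟩
  · intro α ha β hb hs hsn
    left
    exact ⟨ha, hb, .inl (hs.resolve_left hsn)⟩
  · intro Δ' hcl hne hss
    apply hne
    refine Set.Subset.antisymm hcl.1.2.1 ?_
    rintro v (hv | hv)
    · exact hss.1 hv
    · have hvC : v ∈ Cn n := .inr hv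
      obtain ⟨i, c, hc, rfl⟩ := mem_div.1 hv
      obtain ⟨j, hj⟩ := hother i
      rw [hgen i j] at hvC ⊢
      exact hcl.2 _ (hss.1 (hmem i j c 1 hj hc one)) _ (hss.1 (hmem i j c (-1) hj hc mone)) hvC

/-- Remark 3.10 for type `C_n`: the set of short roots is the unique maximal
semi-closed subroot system. -/
theorem statement8 {n : ℕ} (hn : 2 ≤ n) :
    IsMaxSemiClosedSubRS (Cn n) (longBC n) (divBC n) (∅ : Set (E n)) (longBC n) ∧
    ∀ Δ : Set (E n),
      IsMaxSemiClosedSubRS (Cn n) (longBC n) (divBC n) ∅ Δ → Δ = longBC n := by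
  exact ⟨max_part hn, fun Δ h => unique_part Δ h⟩

end BdS
end
end
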